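/- arXiv:1507.00124 — 2 statements merged into one kernel-verified Lean document; each statement's English description precedes it below -/
import Mathlib

section
/- For every involutive Lie algebra automorphism σ (σ ∘ σ = id) of sl₂(ℝ) × sl₂(ℝ) whose fixed-point subalgebra {x : σ(x) = x} is 3-dimensional, there exists a Lie algebra automorphism φ of sl₂(ℝ) × sl₂(ℝ) such that φ ∘ σ ∘ φ⁻¹ is the swap automorphism (X, Y) ↦ (Y, X); in particular the (−1)-eigenspace of σ is the image under φ⁻¹ of {(X, −X) : X ∈ sl₂(ℝ)}. -/
open Matrix

/-- The componentwise Lie bracket on a product of Lie rings. -/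
instance prodLieRing (L M : Type*) [LieRing L] [LieRing M] : LieRing (L × M) where
  bracket p q := (⁅p.1, q.1⁆, ⁅p.2, q.2⁆)
  add_lie x y z := by
    show (⁅x.1 + y.1, z.1⁆, ⁅x.2 + y.2, z.2⁆)
      = (⁅x.1, z.1⁆, ⁅x.2, z.2⁆) + (⁅y.1, z.1⁆, ⁅y.2, z.2⁆)
    simp [add_lie, Prod.ext_iff]
  lie_add x y z := by
    show (⁅x.1, y.1 + z.1⁆, ⁅x.2, y.2 + z.2⁆)
      = (⁅x.1, y.1⁆, ⁅x.2, y.2⁆) + (⁅x.1, z.1⁆, ⁅x.2, z.2⁆)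
    simp [lie_add, Prod.ext_iff]
  lie_self x := by
    show (⁅x.1, x.1⁆, ⁅x.2, x.2⁆) = (0 : L × M)
    simp [Prod.ext_iff]
  leibniz_lie x y z := by
    show (⁅x.1, ⁅y.1, z.1⁆⁆, ⁅x.2, ⁅y.2, z.2⁆⁆)
      = (⁅⁅x.1, y.1⁆, z.1⁆, ⁅⁅x.2, y.2⁆, z.2⁆) + (⁅y.1, ⁅x.1, z.1⁆⁆, ⁅y.2, ⁅x.2, z.2⁆⁆)
    simp [Prod.ext_iff]

/-- The product of two Lie algebras, with the componentwise bracket. -/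
instance prodLieAlgebra (R L M : Type*) [CommRing R] [LieRing L] [LieRing M]
    [LieAlgebra R L] [LieAlgebra R M] : LieAlgebra R (L × M) where
  lie_smul t x y := by
    show (⁅x.1, t • y.1⁆, ⁅x.2, t • y.2⁆) = t • (⁅x.1, y.1⁆, ⁅x.2, y.2⁆)
    simp [Prod.ext_iff]

attribute [local instance 100] LieRing.ofAssociativeRing

/-- `sl₂(ℝ)`, the Lie algebra of traceless real 2×2 matrices. -/
abbrev sl2R : LieSubalgebra ℝ (Matrix (Fin 2) (Fin 2) ℝ) :=
  LieAlgebra.SpecialLinear.sl (Fin 2) ℝ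


/-- The antidiagonal `{(X, −X)}` of `sl₂(ℝ) × sl₂(ℝ)`, as a real subspace. -/
def mAntidiag : Submodule ℝ (sl2R × sl2R) :=
  LinearMap.range (LinearMap.prod LinearMap.id (-LinearMap.id))

/-!
Let `L` be a three-dimensional simple Lie algebra in characteristic different from two, such as
`sl₂`. By simplicity, an automorphism of `L × L` either preserves or interchanges the two factors.

An involution `θ` of `L` has an odd-dimensional fixed space `L₊`: if `L₊ = 0`, then `θ = -1` and
`L` is abelian; if `dim L₊ = 2`, then the (-1)-eigenspace `L₋` is a line, so that
`L = [L, L] ⊆ L₋ + [L₊, L₊]` has dimension at most two. An involution `σ` of `L × L` preserving the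
factors is a pair of involutions of `L`, so its fixed space is even-dimensional. Hence `σ`
interchanges the factors as soon as its fixed space has odd dimension.

The homomorphism `p ↦ (p.1, (σ p).1)` always intertwines `σ` with the swap, and it is bijective when
`σ` interchanges the factors.

Finally, `sl₂` is simple because it is perfect: a nonzero proper ideal would give a perfect quotient
of dimension one or two, whereas the derived algebra of a two-dimensional Lie algebra is at most a
line.
-/

open LieAlgebra Module Submodule

section Bracket

variable {R L : Type*} [CommRing R] [LieRing L] [LieAlgebra R L]

theorem lie_mem_span_lie_of_mem_span_pair {v w x y : L} (hx : x ∈ span R {v, w})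
    (hy : y ∈ span R {v, w}) : ⁅x, y⁆ ∈ R ∙ ⁅v, w⁆ := by
  obtain ⟨a, b, rfl⟩ := mem_span_pair.mp hx
  obtain ⟨c, d, rfl⟩ := mem_span_pair.mp hy
  refine mem_span_singleton.mpr ⟨a * d - b * c, ?_⟩
  simp only [add_lie, lie_add, smul_lie, lie_smul, lie_self, ← lie_skew v w]
  module

theorem eq_top_of_forall_lie_mem (hperfect : ⁅(⊤ : LieIdeal R L), (⊤ : LieIdeal R L)⁆ = ⊤)
    {W : Submodule R L} (hW : ∀ x y : L, ⁅x, y⁆ ∈ W) : W = ⊤ := by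
  let I : LieIdeal R L := { W with lie_mem := fun _ => hW _ _ }
  have hI : ⊤ ≤ I := hperfect ▸ (LieSubmodule.lie_le_iff ..).mpr fun x _ y _ => hW x y
  exact top_le_iff.mp hI

theorem lie_top_top_of_isSimple [IsSimple R L] :
    ⁅(⊤ : LieIdeal R L), (⊤ : LieIdeal R L)⁆ = ⊤ := by
  refine (IsSimple.eq_bot_or_eq_top _).resolve_left fun hbot => ?_
  refine IsSimple.non_abelian (R := R) (L := L) ⟨fun x y => ?_⟩
  rw [← LieSubmodule.mem_bot (R := R) (L := L), ← hbot]
  exact LieSubmodule.lie_mem_lie (LieSubmodule.mem_top x) (LieSubmodule.mem_top y)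

theorem exists_ne_zero_of_isSimple (R L : Type*) [CommRing R] [LieRing L] [LieAlgebra R L]
    [IsSimple R L] : ∃ x : L, x ≠ 0 := by
  by_contra! hzero
  exact IsSimple.non_abelian (R := R) (L := L) ⟨fun _ _ => hzero _⟩

theorem lie_mem_sup_span_lie_of_sup_span_pair_eq_top (I : LieIdeal R L) {v w : L}
    (hI : I.toSubmodule ⊔ span R {v, w} = ⊤) (x y : L) :
    ⁅x, y⁆ ∈ I.toSubmodule ⊔ R ∙ ⁅v, w⁆ := by
  obtain ⟨i, hi, x, hx, rfl⟩ := mem_sup.mp (hI ▸ mem_top : x ∈ I.toSubmodule ⊔ span R {v, w})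
  obtain ⟨j, hj, y, hy, rfl⟩ := mem_sup.mp (hI ▸ mem_top : y ∈ I.toSubmodule ⊔ span R {v, w})
  have hideal : ⁅i, j + y⁆ + ⁅x, j⁆ ∈ I.toSubmodule :=
    add_mem (lie_mem_left R L I _ _ hi) (lie_mem_right R L I _ _ hj)
  rw [add_lie, lie_add x, ← add_assoc]
  exact add_mem_sup hideal (lie_mem_span_lie_of_mem_span_pair hx hy)

theorem eq_top_of_sup_span_pair_eq_top
    (hperfect : ⁅(⊤ : LieIdeal R L), (⊤ : LieIdeal R L)⁆ = ⊤) (I : LieIdeal R L) {v w : L}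
    (hI : I.toSubmodule ⊔ span R {v, w} = ⊤) : I = ⊤ := by
  have hspan : I.toSubmodule ⊔ span R {⁅v, w⁆, ⁅v, w⁆} = ⊤ := by
    rw [Set.pair_eq_singleton]
    exact eq_top_of_forall_lie_mem hperfect (lie_mem_sup_span_lie_of_sup_span_pair_eq_top I hI)
  have hlie := lie_mem_sup_span_lie_of_sup_span_pair_eq_top I hspan
  simp only [lie_self, span_zero_singleton, sup_bot_eq] at hlie
  exact (LieSubmodule.toSubmodule_eq_top _).mp (eq_top_of_forall_lie_mem hperfect hlie)

theorem lie_mem_fixedSubmodule_neg {θ : L →ₗ⁅R⁆ L} {x y : L}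
    (hx : x ∈ (θ : L →ₗ[R] L).fixedSubmodule)
    (hy : y ∈ (-(θ : L →ₗ[R] L)).fixedSubmodule) :
    ⁅x, y⁆ ∈ (-(θ : L →ₗ[R] L)).fixedSubmodule := by
  have hθx : θ x = x := hx
  have hθy : -θ y = y := hy
  change -θ ⁅x, y⁆ = ⁅x, y⁆
  rw [θ.map_lie, hθx, ← lie_neg, hθy]

end Bracket

section Involution

variable {R M : Type*} [CommRing R] [Invertible (2 : R)] [AddCommGroup M] [Module R M]

theorem isCompl_fixedSubmodule_fixedSubmodule_neg {f : M →ₗ[R] M} (hf : Function.Involutive f) :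
    IsCompl f.fixedSubmodule (-f).fixedSubmodule := by
  refine ⟨disjoint_def.mpr fun x hfix hneg => ?_, codisjoint_iff_exists_add_eq.mpr fun x => ?_⟩
  · rw [LinearMap.mem_fixedSubmodule_iff] at hfix hneg
    rw [LinearMap.neg_apply, hfix, neg_eq_iff_add_eq_zero] at hneg
    rw [← invOf_two_smul_add_invOf_two_smul R x, ← smul_add, hneg, smul_zero]
  · refine ⟨(⅟2 : R) • (x + f x), (⅟2 : R) • (x - f x), ?_, ?_, ?_⟩
    · simp [hf x, add_comm]
    · simp [hf x]
    · rw [← smul_add, add_add_sub_cancel, smul_add, invOf_two_smul_add_invOf_two_smul]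

variable {L : Type*} [LieRing L] [LieAlgebra R L] {θ : L →ₗ⁅R⁆ L}

theorem isLieAbelian_of_fixedSubmodule_eq_bot (hθ : Function.Involutive θ)
    (hfix : (θ : L →ₗ[R] L).fixedSubmodule = ⊥) : IsLieAbelian L := by
  have hcompl := isCompl_fixedSubmodule_fixedSubmodule_neg (f := (θ : L →ₗ[R] L)) hθ
  have hneg (x : L) : θ x = -x := by
    have hx : x ∈ (-(θ : L →ₗ[R] L)).fixedSubmodule := by
      rw [hfix] at hcompl
      exact eq_top_of_bot_isCompl hcompl ▸ mem_top
    exact neg_eq_iff_eq_neg.mp hx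
  refine ⟨fun x y => (mem_bot R).mp (hfix ▸ ?_)⟩
  have hlie : θ ⁅x, y⁆ = ⁅x, y⁆ := by rw [θ.map_lie, hneg, hneg, neg_lie, lie_neg, neg_neg]
  exact hlie

theorem lie_mem_fixedSubmodule_neg_sup_span_lie (hθ : Function.Involutive θ) {u v w : L}
    (hfix : (θ : L →ₗ[R] L).fixedSubmodule ≤ span R {v, w})
    (hneg : (-(θ : L →ₗ[R] L)).fixedSubmodule ≤ R ∙ u) (x y : L) :
    ⁅x, y⁆ ∈ (-(θ : L →ₗ[R] L)).fixedSubmodule ⊔ R ∙ ⁅v, w⁆ := by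
  have hcodisj :=
    (isCompl_fixedSubmodule_fixedSubmodule_neg (f := (θ : L →ₗ[R] L)) hθ).codisjoint
  obtain ⟨x₀, x₁, hx₀, hx₁, rfl⟩ := codisjoint_iff_exists_add_eq.mp hcodisj x
  obtain ⟨y₀, y₁, hy₀, hy₁, rfl⟩ := codisjoint_iff_exists_add_eq.mp hcodisj y
  have hmixed : ⁅x₀, y₁⁆ - ⁅y₀, x₁⁆ ∈ (-(θ : L →ₗ[R] L)).fixedSubmodule :=
    sub_mem (lie_mem_fixedSubmodule_neg hx₀ hy₁) (lie_mem_fixedSubmodule_neg hy₀ hx₁)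
  have hzero : ⁅x₁, y₁⁆ = 0 := by
    obtain ⟨a, rfl⟩ := mem_span_singleton.mp (hneg hx₁)
    obtain ⟨b, rfl⟩ := mem_span_singleton.mp (hneg hy₁)
    simp
  have hexpand : ⁅x₀ + x₁, y₀ + y₁⁆ = ⁅x₀, y₁⁆ - ⁅y₀, x₁⁆ + ⁅x₀, y₀⁆ := by
    rw [add_lie, lie_add, lie_add, hzero, ← lie_skew y₀ x₁]
    abel
  rw [hexpand]
  exact add_mem_sup hmixed (lie_mem_span_lie_of_mem_span_pair (hfix hx₀) (hfix hy₀))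

end Involution

section FiniteDimensional

variable {K : Type*} [Field K]

theorem exists_le_span_pair_of_finrank_le_two {V : Type*} [AddCommGroup V] [Module K V]
    {W : Submodule K V} [FiniteDimensional K W] (hW : finrank K W ≤ 2) :
    ∃ v w : V, W ≤ span K {v, w} := by
  have : FiniteDimensional K (span K (W : Set V)) := by rwa [span_eq]
  obtain ⟨t, -, hcard, hspan, -⟩ := exists_finset_span_eq_linearIndepOn K (W : Set V)
  rw [span_eq] at hcard hspan
  obtain ⟨v, w, ht⟩ : ∃ v w : V, (t : Set V) ⊆ {v, w} := by
    classical
    interval_cases finrank K W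
    · exact ⟨0, 0, by simp [Finset.card_eq_zero.mp hcard]⟩
    · obtain ⟨v, rfl⟩ := Finset.card_eq_one.mp hcard
      exact ⟨v, v, by simp⟩
    · obtain ⟨v, w, -, rfl⟩ := Finset.card_eq_two.mp hcard
      exact ⟨v, w, by simp⟩
  exact ⟨v, w, hspan ▸ span_mono ht⟩

variable {L : Type*} [LieRing L] [LieAlgebra K L]

theorem isSimple_of_finrank_eq_three (hdim : finrank K L = 3)
    (hperfect : ⁅(⊤ : LieIdeal K L), (⊤ : LieIdeal K L)⁆ = ⊤) : IsSimple K L := by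
  have : FiniteDimensional K L := .of_finrank_eq_succ hdim
  have : Nontrivial L := nontrivial_of_finrank_eq_succ hdim
  refine ⟨fun I => or_iff_not_imp_left.mpr fun hI => ?_, fun habelian => ?_⟩
  · obtain ⟨V, hV⟩ := Submodule.exists_isCompl I.toSubmodule
    have hpos : 1 ≤ finrank K I.toSubmodule :=
      one_le_finrank_iff.mpr (mt (LieSubmodule.toSubmodule_eq_bot I).mp hI)
    have hsum := finrank_add_eq_of_isCompl hV
    obtain ⟨v, w, hvw⟩ := exists_le_span_pair_of_finrank_le_two (W := V) (by omega)
    refine eq_top_of_sup_span_pair_eq_top hperfect I (v := v) (w := w) ?_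
    exact top_le_iff.mp (hV.sup_eq_top ▸ sup_le_sup_left hvw _)
  · have hbot : (⊥ : Submodule K L) = ⊤ :=
      eq_top_of_forall_lie_mem hperfect fun x y => (mem_bot K).mpr (habelian.trivial x y)
    exact bot_ne_top hbot

variable [Invertible (2 : K)] [IsSimple K L]

theorem finrank_fixedSubmodule_ne_two (hdim : finrank K L = 3) {θ : L →ₗ⁅K⁆ L}
    (hθ : Function.Involutive θ) : finrank K (θ : L →ₗ[K] L).fixedSubmodule ≠ 2 := by
  intro hfix
  have : FiniteDimensional K L := .of_finrank_eq_succ hdim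
  have hsum :=
    finrank_add_eq_of_isCompl (isCompl_fixedSubmodule_fixedSubmodule_neg (f := (θ : L →ₗ[K] L)) hθ)
  have hneg : finrank K (-(θ : L →ₗ[K] L)).fixedSubmodule = 1 := by omega
  obtain ⟨v, w, hvw⟩ := exists_le_span_pair_of_finrank_le_two hfix.le
  obtain ⟨u, hu⟩ := (finrank_le_one_iff_isPrincipal _).mp hneg.le
  have htop : (-(θ : L →ₗ[K] L)).fixedSubmodule ⊔ K ∙ ⁅v, w⁆ = ⊤ :=
    eq_top_of_forall_lie_mem lie_top_top_of_isSimple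
      (lie_mem_fixedSubmodule_neg_sup_span_lie hθ hvw hu.le)
  have hline : finrank K (K ∙ ⁅v, w⁆) ≤ 1 :=
    (finrank_le_one_iff_isPrincipal _).mpr ⟨⁅v, w⁆, rfl⟩
  have hle := finrank_add_le_finrank_add_finrank (-(θ : L →ₗ[K] L)).fixedSubmodule (K ∙ ⁅v, w⁆)
  rw [htop, finrank_top] at hle
  omega

theorem odd_finrank_fixedSubmodule (hdim : finrank K L = 3) {θ : L →ₗ⁅K⁆ L}
    (hθ : Function.Involutive θ) : Odd (finrank K (θ : L →ₗ[K] L).fixedSubmodule) := by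
  have : FiniteDimensional K L := .of_finrank_eq_succ hdim
  have hne_zero : finrank K (θ : L →ₗ[K] L).fixedSubmodule ≠ 0 := fun h =>
    IsSimple.non_abelian (R := K) (L := L)
      (isLieAbelian_of_fixedSubmodule_eq_bot hθ (finrank_eq_zero.mp h))
  have hne_two := finrank_fixedSubmodule_ne_two hdim hθ
  have hle : finrank K (θ : L →ₗ[K] L).fixedSubmodule ≤ 3 := hdim ▸ finrank_le _
  rw [Nat.odd_iff]
  omega

end FiniteDimensional

section Prod

variable {R L₁ L₂ L : Type*} [CommRing R] [LieRing L₁] [LieAlgebra R L₁] [LieRing L₂]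
  [LieAlgebra R L₂] [LieRing L] [LieAlgebra R L]

theorem map_inl_eq_zero_or_map_inr_eq_zero [IsSimple R L] {f : L₁ × L₂ →ₗ⁅R⁆ L}
    (hf : Function.Surjective f) : (∀ x, f (x, 0) = 0) ∨ ∀ y, f (0, y) = 0 := by
  let centralizer : LieIdeal R L :=
    { carrier := {z | ∀ y, ⁅z, f (0, y)⁆ = 0}
      zero_mem' := fun y => zero_lie _
      add_mem' := fun hz hz' y => by rw [add_lie, hz y, hz' y, add_zero]
      smul_mem' := fun c z hz y => by rw [smul_lie, hz y, smul_zero]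
      lie_mem := fun {s z} hz y => by
        obtain ⟨p, rfl⟩ := hf s
        have hp : ⁅f p, f (0, y)⁆ = f (0, ⁅p.2, y⁆) := by simp [← f.map_lie]
        rw [lie_lie, hz y, hp, hz, lie_zero, sub_zero] }
  rcases IsSimple.eq_bot_or_eq_top centralizer with hcentralizer | hcentralizer
  · refine .inl fun x => (LieSubmodule.mem_bot (R := R) (L := L) _).mp (hcentralizer ▸ fun y => ?_)
    have hcomm : ⁅(x, (0 : L₂)), ((0 : L₁), y)⁆ = (0 : L₁ × L₂) := by simp
    rw [← f.map_lie, hcomm, map_zero]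
  · refine .inr fun y => (LieSubmodule.mem_bot (R := R) (L := L) _).mp ?_
    rw [← center_eq_bot R L, LieModule.mem_maxTrivSubmodule]
    exact fun z => (hcentralizer ▸ LieSubmodule.mem_top z : z ∈ centralizer) y

/-- `σ` maps each of the ideals `L₁ × 0` and `0 × L₂` into itself, expressed as the vanishing
of its off-diagonal blocks. -/
def PreservesFactors (σ : (L₁ × L₂) ≃ₗ⁅R⁆ (L₁ × L₂)) : Prop :=
  (∀ x, (σ (x, 0)).2 = 0) ∧ ∀ y, (σ (0, y)).1 = 0

/-- `σ` maps each of the ideals `L₁ × 0` and `0 × L₂` into the other one, expressed as the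
vanishing of its diagonal blocks. -/
def InterchangesFactors (σ : (L₁ × L₂) ≃ₗ⁅R⁆ (L₁ × L₂)) : Prop :=
  (∀ x, (σ (x, 0)).1 = 0) ∧ ∀ y, (σ (0, y)).2 = 0

theorem preservesFactors_or_interchangesFactors [IsSimple R L₁] [IsSimple R L₂]
    (σ : (L₁ × L₂) ≃ₗ⁅R⁆ (L₁ × L₂)) : PreservesFactors σ ∨ InterchangesFactors σ := by
  have hfst := map_inl_eq_zero_or_map_inr_eq_zero
    (f := (LieHom.fst R L₁ L₂).comp σ.toLieHom) (Prod.fst_surjective.comp σ.surjective)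
  have hsnd := map_inl_eq_zero_or_map_inr_eq_zero
    (f := (LieHom.snd R L₁ L₂).comp σ.toLieHom) (Prod.snd_surjective.comp σ.surjective)
  rcases hfst with hfst_inl | hfst_inr <;> rcases hsnd with hsnd_inl | hsnd_inr
  · obtain ⟨x, hx⟩ := exists_ne_zero_of_isSimple R L₁
    have hσ : σ (x, 0) = 0 := Prod.ext (hfst_inl x) (hsnd_inl x)
    exact absurd (congrArg Prod.fst ((map_eq_zero_iff σ σ.injective).mp hσ)) hx
  · exact .inr ⟨hfst_inl, hsnd_inr⟩
  · exact .inl ⟨hsnd_inl, hfst_inr⟩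
  · obtain ⟨y, hy⟩ := exists_ne_zero_of_isSimple R L₂
    have hσ : σ (0, y) = 0 := Prod.ext (hfst_inr y) (hsnd_inr y)
    exact absurd (congrArg Prod.snd ((map_eq_zero_iff σ σ.injective).mp hσ)) hy

theorem apply_eq_apply_inl_add_apply_inr (σ : (L₁ × L₂) ≃ₗ⁅R⁆ (L₁ × L₂)) (p : L₁ × L₂) :
    σ p = σ (p.1, 0) + σ (0, p.2) := by
  rw [← map_add, Prod.fst_add_snd]

/-- The diagonal block `L₁ → L₁` of `σ`, that is `x ↦ (σ (x, 0)).1`. It describes `σ` on the first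
factor when `σ` preserves the factors. -/
def firstBlock (σ : (L₁ × L₂) ≃ₗ⁅R⁆ (L₁ × L₂)) : L₁ →ₗ⁅R⁆ L₁ :=
  ((LieHom.fst R L₁ L₂).comp σ.toLieHom).comp (LieHom.inl R L₁ L₂)

/-- The diagonal block `L₂ → L₂` of `σ`, that is `y ↦ (σ (0, y)).2`. It describes `σ` on the second
factor when `σ` preserves the factors. -/
def secondBlock (σ : (L₁ × L₂) ≃ₗ⁅R⁆ (L₁ × L₂)) : L₂ →ₗ⁅R⁆ L₂ :=
  ((LieHom.snd R L₁ L₂).comp σ.toLieHom).comp (LieHom.inr R L₁ L₂)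

variable {σ : (L₁ × L₂) ≃ₗ⁅R⁆ (L₁ × L₂)}

theorem PreservesFactors.apply_eq (hσ : PreservesFactors σ) (p : L₁ × L₂) :
    σ p = (firstBlock σ p.1, secondBlock σ p.2) := by
  rw [apply_eq_apply_inl_add_apply_inr σ p]
  exact Prod.ext (by simp [hσ.2, firstBlock]) (by simp [hσ.1, secondBlock])

theorem InterchangesFactors.fst_apply (hσ : InterchangesFactors σ) (p : L₁ × L₂) :
    (σ p).1 = (σ (0, p.2)).1 := by
  rw [apply_eq_apply_inl_add_apply_inr σ p, Prod.fst_add, hσ.1, zero_add]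

theorem PreservesFactors.involutive_firstBlock (hσ : PreservesFactors σ)
    (hinv : Function.Involutive σ) : Function.Involutive (firstBlock σ) := fun x => by
  simpa [hσ.apply_eq] using congrArg Prod.fst (hinv (x, 0))

theorem PreservesFactors.involutive_secondBlock (hσ : PreservesFactors σ)
    (hinv : Function.Involutive σ) : Function.Involutive (secondBlock σ) := fun y => by
  simpa [hσ.apply_eq] using congrArg Prod.snd (hinv (0, y))

theorem PreservesFactors.fixedSubmodule_eq_prod (hσ : PreservesFactors σ) :
    σ.toLieHom.toLinearMap.fixedSubmodule = (firstBlock σ).toLinearMap.fixedSubmodule.prod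
      (secondBlock σ).toLinearMap.fixedSubmodule := by
  ext p
  change σ p = p ↔ firstBlock σ p.1 = p.1 ∧ secondBlock σ p.2 = p.2
  rw [hσ.apply_eq, Prod.ext_iff]

end Prod

section FixedSubmoduleProd

variable {K : Type*} [Field K]

theorem finrank_submodule_prod {V W : Type*} [AddCommGroup V] [Module K V] [AddCommGroup W]
    [Module K W] (p : Submodule K V) (q : Submodule K W) [FiniteDimensional K p]
    [FiniteDimensional K q] : finrank K (p.prod q) = finrank K p + finrank K q := by
  have hrange : LinearMap.range (p.subtype.prodMap q.subtype) = p.prod q := by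
    rw [LinearMap.range_prodMap, range_subtype, range_subtype]
  rw [← hrange, ← finrank_prod]
  exact LinearMap.finrank_range_of_inj (p.subtype_injective.prodMap q.subtype_injective)

theorem PreservesFactors.even_finrank_fixedSubmodule [Invertible (2 : K)] {L₁ L₂ : Type*}
    [LieRing L₁] [LieAlgebra K L₁] [IsSimple K L₁] [LieRing L₂] [LieAlgebra K L₂] [IsSimple K L₂]
    (hdim₁ : finrank K L₁ = 3) (hdim₂ : finrank K L₂ = 3) {σ : (L₁ × L₂) ≃ₗ⁅K⁆ (L₁ × L₂)}
    (hσ : PreservesFactors σ) (hinv : Function.Involutive σ) :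
    Even (finrank K σ.toLieHom.toLinearMap.fixedSubmodule) := by
  have : FiniteDimensional K L₁ := .of_finrank_eq_succ hdim₁
  have : FiniteDimensional K L₂ := .of_finrank_eq_succ hdim₂
  rw [hσ.fixedSubmodule_eq_prod, finrank_submodule_prod]
  exact (odd_finrank_fixedSubmodule hdim₁ (hσ.involutive_firstBlock hinv)).add_odd
    (odd_finrank_fixedSubmodule hdim₂ (hσ.involutive_secondBlock hinv))

end FixedSubmoduleProd

section Swap

variable {R L : Type*} [CommRing R] [LieRing L] [LieAlgebra R L]

/-- The homomorphism `p ↦ (p.1, (σ p).1)`, which intertwines an involution `σ` with the swap.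
It is the conjugating automorphism when `σ` interchanges the factors. -/
def swapIntertwiner (σ : (L × L) ≃ₗ⁅R⁆ (L × L)) : L × L →ₗ⁅R⁆ L × L :=
  (LieHom.fst R L L).prod ((LieHom.fst R L L).comp σ.toLieHom)

theorem swapIntertwiner_apply (σ : (L × L) ≃ₗ⁅R⁆ (L × L)) (p : L × L) :
    swapIntertwiner σ p = (p.1, (σ p).1) := rfl

variable {σ : (L × L) ≃ₗ⁅R⁆ (L × L)}

theorem swapIntertwiner_apply_map (hinv : Function.Involutive σ) (p : L × L) :
    swapIntertwiner σ (σ p) = (swapIntertwiner σ p).swap := by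
  rw [swapIntertwiner_apply, swapIntertwiner_apply, hinv p, Prod.swap_prod_mk]

theorem InterchangesFactors.bijective_swapIntertwiner (hσ : InterchangesFactors σ)
    (hinv : Function.Involutive σ) : Function.Bijective (swapIntertwiner σ) := by
  refine ⟨(injective_iff_map_eq_zero _).mpr fun p hp => ?_, fun q => ?_⟩
  · obtain ⟨hp₁, hσp⟩ : p.1 = 0 ∧ (σ p).1 = 0 := Prod.ext_iff.mp hp
    have hp_eq : p = (0, p.2) := Prod.ext hp₁ rfl
    refine (map_eq_zero_iff σ σ.injective).mp (Prod.ext hσp ?_)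
    rw [hp_eq]
    exact hσ.2 p.2
  · refine ⟨(q.1, (σ (q.2, 0)).2), ?_⟩
    have hq : σ (0, (σ (q.2, 0)).2) = (q.2, 0) := by
      rw [show (0, (σ (q.2, 0)).2) = σ (q.2, 0) from Prod.ext (hσ.1 q.2).symm rfl, hinv]
    rw [swapIntertwiner_apply, hσ.fst_apply, hq]

theorem InterchangesFactors.exists_conj_eq_swap (hσ : InterchangesFactors σ)
    (hinv : Function.Involutive σ) :
    ∃ φ : (L × L) ≃ₗ⁅R⁆ (L × L), ∀ p, φ (σ (φ.symm p)) = p.swap := by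
  let φ := LieEquiv.ofBijective (swapIntertwiner σ) (hσ.bijective_swapIntertwiner hinv)
  refine ⟨φ, fun p => ?_⟩
  have hφ : φ (σ (φ.symm p)) = (φ (φ.symm p)).swap := swapIntertwiner_apply_map hinv _
  rw [hφ, φ.apply_symm_apply]

theorem ker_add_id_eq_map_of_conj_eq_swap {φ : (L × L) ≃ₗ⁅R⁆ (L × L)}
    (hφ : ∀ p, φ (σ (φ.symm p)) = p.swap) :
    LinearMap.ker (σ.toLieHom.toLinearMap + LinearMap.id) =
      map φ.symm.toLieHom.toLinearMap
        (LinearMap.range (LinearMap.prod (LinearMap.id : L →ₗ[R] L) (-LinearMap.id))) := by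
  ext p
  have hp : φ (σ p) = (φ p).swap := by simpa using hφ (φ p)
  have hmem_map : p ∈ map φ.symm.toLieHom.toLinearMap
      (LinearMap.range (LinearMap.prod (LinearMap.id : L →ₗ[R] L) (-LinearMap.id))) ↔
      φ p ∈ LinearMap.range (LinearMap.prod (LinearMap.id : L →ₗ[R] L) (-LinearMap.id)) :=
    mem_map_equiv (e := φ.symm.toLinearEquiv) _
  rw [hmem_map]
  calc σ p + p = 0 ↔ φ (σ p) = -φ p := by
        rw [← map_neg, (EquivLike.injective φ).eq_iff, eq_neg_iff_add_eq_zero]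
    _ ↔ -(φ p).1 = (φ p).2 := by
        rw [hp, Prod.ext_iff]
        exact ⟨fun h => h.1.symm, fun h => ⟨h.symm, neg_eq_iff_eq_neg.mp h⟩⟩
    _ ↔ ∃ x, (x, -x) = φ p := by
        exact ⟨fun h => ⟨(φ p).1, Prod.ext rfl h⟩, fun ⟨x, hx⟩ => by rw [← hx]⟩

end Swap

section SpecialLinear

theorem finrank_sl_add_one (n K : Type*) [Fintype n] [DecidableEq n] [Nonempty n] [Field K] :
    finrank K (SpecialLinear.sl n K) + 1 = Fintype.card n * Fintype.card n := by
  have hrank := LinearMap.finrank_range_add_finrank_ker (Matrix.traceLinearMap n K K)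
  rw [LinearMap.range_eq_top.mpr Matrix.trace_surjective, finrank_top, finrank_self,
    finrank_matrix, finrank_self, mul_one, add_comm] at hrank
  exact hrank

theorem finrank_sl_fin_two (K : Type*) [Field K] : finrank K (SpecialLinear.sl (Fin 2) K) = 3 :=
  Nat.succ_injective (finrank_sl_add_one (Fin 2) K)

theorem lie_top_top_sl_fin_two (R : Type*) [CommRing R] [Invertible (2 : R)] :
    ⁅(⊤ : LieIdeal R (SpecialLinear.sl (Fin 2) R)), (⊤ : LieIdeal R (SpecialLinear.sl (Fin 2) R))⁆ =
      ⊤ := by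
  refine eq_top_iff.mpr fun x _ => ?_
  let e (a : R) := SpecialLinear.single (0 : Fin 2) 1 (by decide) a
  let f (a : R) := SpecialLinear.single (1 : Fin 2) 0 (by decide) a
  let h := SpecialLinear.singleSubSingle (0 : Fin 2) 1 (1 : R)
  have htrace : x.val 1 1 = -x.val 0 0 := by
    have hx : x.val.trace = 0 := x.property
    rw [Matrix.trace_fin_two] at hx
    exact (neg_eq_of_add_eq_zero_right hx).symm
  have hdecomp : x = ⁅e 1, f (x.val 0 0)⁆ + ⁅h, e (⅟2 * x.val 0 1) - f (⅟2 * x.val 1 0)⁆ := by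
    ext i j
    fin_cases i <;> fin_cases j <;>
      simp [e, f, h, htrace, Ring.lie_def, ← two_mul]
  rw [hdecomp]
  exact add_mem (LieSubmodule.lie_mem_lie (LieSubmodule.mem_top _) (LieSubmodule.mem_top _))
    (LieSubmodule.lie_mem_lie (LieSubmodule.mem_top _) (LieSubmodule.mem_top _))

theorem isSimple_sl_fin_two (K : Type*) [Field K] [Invertible (2 : K)] :
    IsSimple K (SpecialLinear.sl (Fin 2) K) :=
  isSimple_of_finrank_eq_three (finrank_sl_fin_two K) (lie_top_top_sl_fin_two K)

end SpecialLinear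

theorem stmt_14_general {K L : Type*} [Field K] [Invertible (2 : K)] [LieRing L] [LieAlgebra K L]
    [IsSimple K L] (hdim : finrank K L = 3) (σ : (L × L) ≃ₗ⁅K⁆ (L × L))
    (hinv : ∀ x, σ (σ x) = x)
    (hodd : Odd (finrank K (LinearMap.ker (σ.toLieHom.toLinearMap - LinearMap.id)))) :
    ∃ φ : (L × L) ≃ₗ⁅K⁆ (L × L),
      (∀ p : L × L, φ (σ (φ.symm p)) = (p.2, p.1)) ∧
      LinearMap.ker (σ.toLieHom.toLinearMap + LinearMap.id) =
        map φ.symm.toLieHom.toLinearMap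
          (LinearMap.range (LinearMap.prod (LinearMap.id : L →ₗ[K] L) (-LinearMap.id))) := by
  rw [← LinearMap.fixedSubmodule_eq_ker] at hodd
  have hσ : InterchangesFactors σ :=
    (preservesFactors_or_interchangesFactors σ).resolve_left fun hpres =>
      Nat.not_even_iff_odd.mpr hodd (hpres.even_finrank_fixedSubmodule hdim hdim hinv)
  obtain ⟨φ, hφ⟩ := hσ.exists_conj_eq_swap hinv
  exact ⟨φ, hφ, ker_add_id_eq_map_of_conj_eq_swap hφ⟩

/-- every involutive Lie algebra automorphism `σ` of `sl₂(ℝ) × sl₂(ℝ)` with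
3-dimensional fixed-point subalgebra is conjugate, by some automorphism `φ`, to the swap
`(X, Y) ↦ (Y, X)`; in particular its `(−1)`-eigenspace is the image under `φ⁻¹` of
`{(X, −X) : X ∈ sl₂(ℝ)}`. -/
theorem stmt_14 (σ : (sl2R × sl2R) ≃ₗ⁅ℝ⁆ (sl2R × sl2R))
    (hinv : ∀ x, σ (σ x) = x)
    (hdim : Module.finrank ℝ
      (LinearMap.ker (σ.toLieHom.toLinearMap - LinearMap.id)) = 3) :
    ∃ φ : (sl2R × sl2R) ≃ₗ⁅ℝ⁆ (sl2R × sl2R),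
      (∀ p : sl2R × sl2R, φ (σ (φ.symm p)) = (p.2, p.1)) ∧
      LinearMap.ker (σ.toLieHom.toLinearMap + LinearMap.id) =
        Submodule.map φ.symm.toLieHom.toLinearMap mAntidiag := by
  have := isSimple_sl_fin_two ℝ
  exact stmt_14_general (finrank_sl_fin_two ℝ) σ hinv (hdim ▸ by decide)
end

section
/- For all λ₁, …, λ₆ ∈ ℝ and x = λ₁e₁ + λ₂e₂ + λ₃e₃ + λ₄e₄ + λ₅e₅ + λ₆e₆ ∈ g, the Killing form of g satisfies trace(ad x ∘ ad x) = 16·(λ₂² + λ₃² − λ₄²), where the trace is that of the endomorphism ad x ∘ ad x of the 6-dimensional real vector space g. -/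
open Matrix

attribute [local instance 100] LieRing.ofAssociativeRing

/-- The 4×4 block matrix `blk(A, X) = [[A, X], [0, A]]`. -/
noncomputable def blk (A X : Matrix (Fin 2) (Fin 2) ℝ) : Matrix (Fin 4) (Fin 4) ℝ :=
  Matrix.reindexAlgEquiv (R := ℝ) (A := ℝ) finSumFinEquiv (Matrix.fromBlocks A X 0 A)

lemma blk_add (A X B Y : Matrix (Fin 2) (Fin 2) ℝ) :
    blk A X + blk B Y = blk (A + B) (X + Y) := by
  simp only [blk, ← map_add, Matrix.fromBlocks_add, add_zero]

lemma blk_smul (c : ℝ) (A X : Matrix (Fin 2) (Fin 2) ℝ) :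
    c • blk A X = blk (c • A) (c • X) := by
  rw [blk, blk, ← _root_.map_smul, Matrix.fromBlocks_smul, smul_zero]

lemma blk_neg (A X : Matrix (Fin 2) (Fin 2) ℝ) : -blk A X = blk (-A) (-X) := by
  rw [← neg_one_smul ℝ (blk A X), blk_smul, neg_one_smul, neg_one_smul]

lemma blk_sub (A X B Y : Matrix (Fin 2) (Fin 2) ℝ) :
    blk A X - blk B Y = blk (A - B) (X - Y) := by
  rw [sub_eq_add_neg, blk_neg, blk_add, ← sub_eq_add_neg, ← sub_eq_add_neg]

lemma blk_zero : blk 0 0 = 0 := by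
  simp [blk, Matrix.fromBlocks_zero]

lemma blk_mul (A X B Y : Matrix (Fin 2) (Fin 2) ℝ) :
    blk A X * blk B Y = blk (A * B) (A * Y + X * B) := by
  rw [blk, blk, blk, ← _root_.map_mul, Matrix.fromBlocks_multiply]
  simp only [mul_zero, zero_mul, add_zero, zero_add]

/-- `g`: the Lie subalgebra of `gl₄(ℝ)` consisting of the block matrices `blk(A,X)` with
`A`, `X` traceless. -/
noncomputable def gLie : LieSubalgebra ℝ (Matrix (Fin 4) (Fin 4) ℝ) where
  carrier := {M | ∃ A X : Matrix (Fin 2) (Fin 2) ℝ, A.trace = 0 ∧ X.trace = 0 ∧ M = blk A X}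
  add_mem' := by
    rintro M N ⟨A, X, hA, hX, rfl⟩ ⟨B, Y, hB, hY, rfl⟩
    exact ⟨A + B, X + Y, by simp [hA, hB], by simp [hX, hY], blk_add A X B Y⟩
  zero_mem' := ⟨0, 0, Matrix.trace_zero (Fin 2) ℝ, Matrix.trace_zero (Fin 2) ℝ, blk_zero.symm⟩
  smul_mem' := by
    rintro c M ⟨A, X, hA, hX, rfl⟩
    exact ⟨c • A, c • X, by simp [hA], by simp [hX], blk_smul c A X⟩
  lie_mem' := by
    rintro M N ⟨A, X, hA, hX, rfl⟩ ⟨B, Y, hB, hY, rfl⟩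
    refine ⟨A * B - B * A, (A * Y + X * B) - (B * X + Y * A), ?_, ?_, ?_⟩
    · simp [Matrix.trace_sub, Matrix.trace_mul_comm A B]
    · simp only [Matrix.trace_sub, Matrix.trace_add]
      rw [Matrix.trace_mul_comm A Y, Matrix.trace_mul_comm X B]
      ring
    · show blk A X * blk B Y - blk B Y * blk A X = _
      rw [blk_mul, blk_mul, blk_sub]

/-- The matrix `H`. -/
def matH : Matrix (Fin 2) (Fin 2) ℝ := !![1, 0; 0, -1]

/-- The matrix `T`. -/
def matT : Matrix (Fin 2) (Fin 2) ℝ := !![0, 1; 1, 0]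

/-- The matrix `U`. -/
def matU : Matrix (Fin 2) (Fin 2) ℝ := !![0, 1; -1, 0]

/-- `e₁ = blk(0, −U)`. -/
noncomputable def e₁ : Matrix (Fin 4) (Fin 4) ℝ := blk 0 (-matU)

/-- `e₂ = blk(H, 0)`. -/
noncomputable def e₂ : Matrix (Fin 4) (Fin 4) ℝ := blk matH 0

/-- `e₃ = blk(T, 0)`. -/
noncomputable def e₃ : Matrix (Fin 4) (Fin 4) ℝ := blk matT 0

/-- `e₄ = blk(U, 0)`. -/
noncomputable def e₄ : Matrix (Fin 4) (Fin 4) ℝ := blk matU 0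

/-- `e₅ = blk(0, −H)`. -/
noncomputable def e₅ : Matrix (Fin 4) (Fin 4) ℝ := blk 0 (-matH)

/-- `e₆ = blk(0, T)`. -/
noncomputable def e₆ : Matrix (Fin 4) (Fin 4) ℝ := blk 0 matT

/-!
A block matrix `blk A X` acts on `g ≅ sl₂ ⋉ sl₂` by a block triangular operator whose two diagonal
blocks are both `ad A`. Hence `X` does not contribute to the Killing form of `g`, which is twice the
Killing form `4 * trace (A * B)` of `sl₂`. The latter is the restriction of the Killing form of
`gl₂`, where `ad A ∘ ad B` is a signed sum of maps `Y ↦ C * Y * D`, each of trace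
`trace C * trace D`.
-/

section SemidirectProduct

variable {R M N : Type*} [CommRing R] [AddCommGroup M] [Module R M] [Module.Free R M]
  [Module.Finite R M] [AddCommGroup N] [Module R N] [Module.Free R N] [Module.Finite R N]

lemma trace_prod_eq_add (f : Module.End R (M × N)) :
    LinearMap.trace R (M × N) f =
      LinearMap.trace R M (.fst R M N ∘ₗ f ∘ₗ .inl R M N) +
        LinearMap.trace R N (.snd R M N ∘ₗ f ∘ₗ .inr R M N) := by
  have f_eq : f = (f ∘ₗ .inl R M N) ∘ₗ .fst R M N + (f ∘ₗ .inr R M N) ∘ₗ .snd R M N := by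
    ext <;> simp [Prod.mk_zero_zero]
  conv_lhs => rw [f_eq, map_add]
  rw [LinearMap.trace_comp_comm' (.fst R M N), LinearMap.trace_comp_comm' (.snd R M N)]

variable {G L V : Type*} [LieRing G] [LieAlgebra R G]
  [LieRing L] [LieAlgebra R L] [Module.Free R L] [Module.Finite R L]
  [AddCommGroup V] [Module R V] [Module.Free R V] [Module.Finite R V]
  [LieRingModule L V] [LieModule R L V]

/-- The bracket condition says that `e` exhibits `G` as `L ⋉ V`, with `V` an abelian ideal. -/
lemma killingForm_semidirect (e : (L × V) ≃ₗ[R] G)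
    (he : ∀ p q, ⁅e p, e q⁆ = e (⁅p.1, q.1⁆, ⁅p.1, q.2⁆ - ⁅q.1, p.2⁆)) (p q : L × V) :
    killingForm R G (e p) (e q) = killingForm R L p.1 q.1 + LieModule.traceForm R L V p.1 q.1 := by
  have conj_ad_apply (r : L × V) :
      e.symm.conj (LieAlgebra.ad R G (e p) ∘ₗ LieAlgebra.ad R G (e q)) r =
        (⁅p.1, ⁅q.1, r.1⁆⁆, ⁅p.1, ⁅q.1, r.2⁆ - ⁅r.1, q.2⁆⁆ - ⁅⁅q.1, r.1⁆, p.2⁆) := by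
    simp [LinearEquiv.conj_apply, he]
  rw [killingForm_apply_apply, ← LinearMap.trace_conj' _ e.symm, trace_prod_eq_add,
    killingForm_apply_apply, LieModule.traceForm_apply_apply]
  congr 2 <;> ext v <;> simp [conj_ad_apply]

end SemidirectProduct

section SpecialLinear

open LieAlgebra.SpecialLinear

variable {n R : Type*} [Fintype n] [CommRing R]

lemma trace_mulLeft_comp_mulRight (A B : Matrix n n R) :
    LinearMap.trace R (Matrix n n R) (LinearMap.mulLeft R A ∘ₗ LinearMap.mulRight R B) =
      A.trace * B.trace := by
  classical
  rw [LinearMap.trace_eq_matrix_trace R (Matrix.stdBasis R n n), Matrix.trace,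
    Fintype.sum_prod_type, Matrix.trace, Matrix.trace, Finset.sum_mul_sum]
  refine Finset.sum_congr rfl fun i _ => Finset.sum_congr rfl fun j _ => ?_
  rw [Matrix.diag_apply, LinearMap.toMatrix_apply, Matrix.stdBasis_eq_single]
  change (A * (Matrix.single i j 1 * B) : Matrix n n R) i j = A i i * B j j
  simp [Matrix.mul_apply, Matrix.single_apply, ite_and]

variable [DecidableEq n]

lemma killingForm_matrix (A B : Matrix n n R) :
    killingForm R (Matrix n n R) A B =
      2 * Fintype.card n * (A * B).trace - 2 * (A.trace * B.trace) := by
  have ad_comp_ad : LieAlgebra.ad R (Matrix n n R) A ∘ₗ LieAlgebra.ad R (Matrix n n R) B =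
      LinearMap.mulLeft R (A * B) ∘ₗ LinearMap.mulRight R 1
        - LinearMap.mulLeft R A ∘ₗ LinearMap.mulRight R B
        - LinearMap.mulLeft R B ∘ₗ LinearMap.mulRight R A
        + LinearMap.mulLeft R 1 ∘ₗ LinearMap.mulRight R (B * A) := by
    refine LinearMap.ext fun Y => ?_
    simp only [LinearMap.comp_apply, LinearMap.add_apply, LinearMap.sub_apply,
      LieAlgebra.ad_apply, Ring.lie_def, LinearMap.mulLeft_apply, LinearMap.mulRight_apply]
    noncomm_ring
  simp only [killingForm_apply_apply, ad_comp_ad, map_add, map_sub, trace_mulLeft_comp_mulRight,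
    Matrix.trace_one, Matrix.trace_mul_comm B A]
  ring

lemma killingForm_sl [IsDomain R] [IsPrincipalIdealRing R] (A B : sl n R) :
    killingForm R (sl n R) A B = 2 * Fintype.card n * (A.val * B.val).trace := by
  have trace_val (C : sl n R) : C.val.trace = 0 := C.property
  have ad_comp_ad_mem (Y : Matrix n n R) :
      (LieAlgebra.ad R (Matrix n n R) A ∘ₗ LieAlgebra.ad R (Matrix n n R) B) Y ∈
        (sl n R).toSubmodule :=
    LieAlgebra.matrix_trace_commutator_zero n R _ _
  calc killingForm R (sl n R) A B
      = killingForm R (Matrix n n R) A.val B.val :=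
        LinearMap.trace_restrict_eq_of_forall_mem (sl n R).toSubmodule _ ad_comp_ad_mem
    _ = 2 * Fintype.card n * (A.val * B.val).trace := by
        rw [killingForm_matrix, trace_val, zero_mul, mul_zero, sub_zero]

end SpecialLinear

section BlockMatrices

open LieAlgebra.SpecialLinear

lemma blk_inj {A X B Y : Matrix (Fin 2) (Fin 2) ℝ} : blk A X = blk B Y ↔ A = B ∧ X = Y := by
  simp only [blk, EmbeddingLike.apply_eq_iff_eq, Matrix.fromBlocks_inj]
  tauto

lemma blk_lie (A X B Y : Matrix (Fin 2) (Fin 2) ℝ) :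
    ⁅blk A X, blk B Y⁆ = blk ⁅A, B⁆ (⁅A, Y⁆ - ⁅B, X⁆) := by
  simp only [Ring.lie_def, blk_mul, blk_sub]
  congr 1
  abel

/-- The linear isomorphism `(A, X) ↦ blk A X` identifying `g` with the space underlying
`sl₂ ⋉ sl₂`; the first factor is the acting one. -/
noncomputable def blkEquiv : (sl (Fin 2) ℝ × sl (Fin 2) ℝ) ≃ₗ[ℝ] gLie :=
  LinearEquiv.ofBijective
    { toFun p := ⟨blk p.1 p.2, p.1, p.2, p.1.property, p.2.property, rfl⟩
      map_add' _ _ := Subtype.ext (blk_add ..).symm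
      map_smul' _ _ := Subtype.ext (blk_smul ..).symm }
    ⟨fun _ _ h =>
      have ⟨hA, hX⟩ := blk_inj.mp (congrArg Subtype.val h)
      Prod.ext (Subtype.ext hA) (Subtype.ext hX),
    fun ⟨_, A, X, hA, hX, hM⟩ => ⟨(⟨A, hA⟩, ⟨X, hX⟩), Subtype.ext hM.symm⟩⟩

lemma coe_blkEquiv (p : sl (Fin 2) ℝ × sl (Fin 2) ℝ) :
    (blkEquiv p : Matrix (Fin 4) (Fin 4) ℝ) = blk p.1 p.2 :=
  rfl

lemma lie_blkEquiv (p q : sl (Fin 2) ℝ × sl (Fin 2) ℝ) :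
    ⁅blkEquiv p, blkEquiv q⁆ = blkEquiv (⁅p.1, q.1⁆, ⁅p.1, q.2⁆ - ⁅q.1, p.2⁆) :=
  Subtype.ext (blk_lie ..)

lemma killingForm_gLie {x y : gLie} {A X B Y : Matrix (Fin 2) (Fin 2) ℝ}
    (hx : (x : Matrix (Fin 4) (Fin 4) ℝ) = blk A X)
    (hy : (y : Matrix (Fin 4) (Fin 4) ℝ) = blk B Y) :
    killingForm ℝ gLie x y = 8 * (A * B).trace := by
  obtain ⟨p, rfl⟩ := blkEquiv.surjective x
  obtain ⟨q, rfl⟩ := blkEquiv.surjective y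
  rw [coe_blkEquiv, blk_inj] at hx hy
  rw [killingForm_semidirect blkEquiv lie_blkEquiv, killingForm_sl, hx.1, hy.1, Fintype.card_fin]
  ring

lemma linearCombination_eq_blk (l₁ l₂ l₃ l₄ l₅ l₆ : ℝ) :
    l₁ • e₁ + l₂ • e₂ + l₃ • e₃ + l₄ • e₄ + l₅ • e₅ + l₆ • e₆ =
      blk (l₂ • matH + l₃ • matT + l₄ • matU) (-l₁ • matU - l₅ • matH + l₆ • matT) := by
  simp only [e₁, e₂, e₃, e₄, e₅, e₆, blk_smul, blk_add]
  congr 1 <;> module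

lemma trace_mul_self_smul_matH_add_smul_matT_add_smul_matU (a b c : ℝ) :
    ((a • matH + b • matT + c • matU) * (a • matH + b • matT + c • matU)).trace =
      2 * (a ^ 2 + b ^ 2 - c ^ 2) := by
  have entries_eq : a • matH + b • matT + c • matU = !![a, b + c; b - c, -a] := by
    simp [matH, matT, matU, sub_eq_add_neg]
  rw [entries_eq, Matrix.mul_fin_two, Matrix.trace_fin_two_of]
  ring

end BlockMatrices

/-- for `x = λ₁e₁ + λ₂e₂ + λ₃e₃ + λ₄e₄ + λ₅e₅ + λ₆e₆ ∈ g`, the Killing form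
of `g` satisfies `trace (ad x ∘ ad x) = 16·(λ₂² + λ₃² − λ₄²)`. -/
theorem stmt_17 (l₁ l₂ l₃ l₄ l₅ l₆ : ℝ) (x : gLie)
    (hx : (x : Matrix (Fin 4) (Fin 4) ℝ) =
      l₁ • e₁ + l₂ • e₂ + l₃ • e₃ + l₄ • e₄ + l₅ • e₅ + l₆ • e₆) :
    killingForm ℝ gLie x x = 16 * (l₂ ^ 2 + l₃ ^ 2 - l₄ ^ 2) := by
  rw [linearCombination_eq_blk] at hx
  rw [killingForm_gLie hx hx, trace_mul_self_smul_matH_add_smul_matT_add_smul_matU]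
  ring
end
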